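/- Let G be a strong tournament of order n ≥ 3. Then the average distance of ILTT^t(G) converges as t → ∞, with limit lim_{t→∞} L(ILTT^t(G)) = (2 + (n−1)·L(G))/n. -/

import Mathlib

open scoped Classical

noncomputable section

/-- A tournament: a finite directed graph where every pair of distinct nodes
is joined by exactly one arc. -/
structure Tournament where
  V : Type
  [fintypeV : Fintype V]
  [decEqV : DecidableEq V]
  arc : V → V → Prop
  irrefl : ∀ x, ¬ arc x x
  exactlyOne : ∀ x y, x ≠ y → (arc x y ↔ ¬ arc y x)

attribute [instance] Tournament.fintypeV Tournament.decEqV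

namespace Tournament

/-- The ILTT extension: vertices are `V ⊕ V` where `Sum.inl x` is the original
node `x` and `Sum.inr x` is its clone `x'`. -/
def ILTT (T : Tournament) : Tournament where
  V := T.V ⊕ T.V
  arc := fun u v =>
    match u, v with
    | Sum.inl x, Sum.inl y => T.arc x y
    | Sum.inl x, Sum.inr y => T.arc x y
    | Sum.inr x, Sum.inl y => T.arc x y ∨ x = y
    | Sum.inr x, Sum.inr y => T.arc x y
  irrefl := by rintro (x | x) h <;> exact T.irrefl x h
  exactlyOne := by
    rintro (x | x) (y | y) hxy
    · exact T.exactlyOne x y (fun h => hxy (by rw [h]))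
    · by_cases h : x = y
      · subst h; simp [T.irrefl x]
      · have := T.exactlyOne x y h
        simp only [not_or]
        constructor
        · intro ha; exact ⟨this.mp ha, fun h' => h h'.symm⟩
        · intro ha; exact this.mpr ha.1
    · by_cases h : x = y
      · subst h; simp [T.irrefl x]
      · have := T.exactlyOne x y h
        constructor
        · rintro (ha | ha)
          · exact this.mp ha
          · exact absurd ha h
        · intro ha; exact Or.inl (this.mpr ha)
    · exact T.exactlyOne x y (fun h => hxy (by rw [h]))

/-- The dual ILTT extension: identical to `ILTT` except the arcs between
clones are reversed. -/
def ILTTd (T : Tournament) : Tournament where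
  V := T.V ⊕ T.V
  arc := fun u v =>
    match u, v with
    | Sum.inl x, Sum.inl y => T.arc x y
    | Sum.inl x, Sum.inr y => T.arc x y
    | Sum.inr x, Sum.inl y => T.arc x y ∨ x = y
    | Sum.inr x, Sum.inr y => T.arc y x
  irrefl := by rintro (x | x) h <;> exact T.irrefl x h
  exactlyOne := by
    rintro (x | x) (y | y) hxy
    · exact T.exactlyOne x y (fun h => hxy (by rw [h]))
    · by_cases h : x = y
      · subst h; simp [T.irrefl x]
      · have := T.exactlyOne x y h
        simp only [not_or]
        constructor
        · intro ha; exact ⟨this.mp ha, fun h' => h h'.symm⟩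
        · intro ha; exact this.mpr ha.1
    · by_cases h : x = y
      · subst h; simp [T.irrefl x]
      · have := T.exactlyOne x y h
        constructor
        · rintro (ha | ha)
          · exact this.mp ha
          · exact absurd ha h
        · intro ha; exact Or.inl (this.mpr ha)
    · exact T.exactlyOne y x (fun h => hxy (by rw [h]))

/-- A tournament is strong if, for every ordered pair of nodes, there is a
directed path from the first to the second. -/
def Strong (T : Tournament) : Prop := ∀ u v : T.V, Relation.ReflTransGen T.arc u v

/-- `HasWalk T u v n` : there is a directed walk of length `n` from `u` to `v`. -/
def HasWalk (T : Tournament) (u v : T.V) (n : ℕ) : Prop :=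
  ∃ f : Fin (n + 1) → T.V, f 0 = u ∧ f (Fin.last n) = v ∧
    ∀ i : Fin n, T.arc (f i.castSucc) (f i.succ)

/-- The distance from `u` to `v`: the length of a shortest directed path. -/
def dist (T : Tournament) (u v : T.V) : ℕ := sInf {n | HasWalk T u v n}

/-- The diameter: the maximum distance over ordered pairs of distinct nodes. -/
def diam (T : Tournament) : ℕ :=
  (Finset.univ.filter (fun p : T.V × T.V => p.1 ≠ p.2)).sup
    (fun p => T.dist p.1 p.2)

/-- The Wiener index: the sum of distances over ordered pairs of distinct nodes. -/
def wiener (T : Tournament) : ℕ :=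
  ∑ p ∈ Finset.univ.filter (fun p : T.V × T.V => p.1 ≠ p.2), T.dist p.1 p.2

/-- The average distance `L(T) = W(T)/(m(m-1))` where `m` is the order. -/
def avgDist (T : Tournament) : ℝ :=
  (T.wiener : ℝ) / ((Fintype.card T.V : ℝ) * ((Fintype.card T.V : ℝ) - 1))

/-- `J` is a subtournament of `K`. -/
def IsSubtournament (J K : Tournament) : Prop :=
  ∃ f : J.V → K.V, Function.Injective f ∧ ∀ u v : J.V, J.arc u v ↔ K.arc (f u) (f v)

/-- The linear order on `t` nodes. -/
def linearTournament (t : ℕ) : Tournament where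
  V := Fin t
  arc := fun i j => i < j
  irrefl := fun i => lt_irrefl i
  exactlyOne := fun i j h => by
    rw [not_lt]
    exact ⟨le_of_lt, fun hle => hle.lt_of_ne h⟩

/-- A tournament is Hamiltonian if it has a directed cycle through all nodes. -/
def IsHamiltonian (T : Tournament) : Prop :=
  ∃ f : ZMod (Fintype.card T.V) ≃ T.V, ∀ i, T.arc (f i) (f (i + 1))

/-- `S` is an in-dominating set. -/
def InDom (T : Tournament) (S : Finset T.V) : Prop :=
  ∀ u, u ∉ S → ∃ v ∈ S, T.arc u v

/-- `S` is an out-dominating set. -/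
def OutDom (T : Tournament) (S : Finset T.V) : Prop :=
  ∀ u, u ∉ S → ∃ v ∈ S, T.arc v u

/-- The in-domination number. -/
def inDomNum (T : Tournament) : ℕ := sInf {n | ∃ S : Finset T.V, T.InDom S ∧ S.card = n}

/-- The out-domination number. -/
def outDomNum (T : Tournament) : ℕ := sInf {n | ∃ S : Finset T.V, T.OutDom S ∧ S.card = n}

end Tournament

namespace Tournament

variable {T : Tournament}

theorem hasWalk_zero {u v : T.V} : T.HasWalk u v 0 ↔ u = v := by
  constructor
  · rintro ⟨f, rfl, rfl, -⟩
    rfl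
  · rintro rfl
    exact ⟨fun _ => u, rfl, rfl, fun i => i.elim0⟩

theorem hasWalk_succ {u v : T.V} {k : ℕ} :
    T.HasWalk u v (k + 1) ↔ ∃ w, T.arc u w ∧ T.HasWalk w v k := by
  constructor
  · rintro ⟨f, rfl, rfl, hf⟩
    exact ⟨f 1, hf 0, fun i => f i.succ, rfl, rfl, fun i => hf i.succ⟩
  · rintro ⟨w, huw, f, rfl, rfl, hf⟩
    refine ⟨Fin.cons u f, rfl, by rw [← Fin.succ_last, Fin.cons_succ], fun i => ?_⟩
    refine Fin.cases ?_ (fun j => ?_) i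
    · exact huw
    · rw [← Fin.succ_castSucc, Fin.cons_succ, Fin.cons_succ]
      exact hf j

theorem Strong.exists_hasWalk (hT : T.Strong) (u v : T.V) : ∃ k, T.HasWalk u v k := by
  induction hT u v using Relation.ReflTransGen.head_induction_on with
  | refl => exact ⟨0, hasWalk_zero.2 rfl⟩
  | head h _ ih =>
    obtain ⟨k, hk⟩ := ih
    exact ⟨k + 1, hasWalk_succ.2 ⟨_, h, hk⟩⟩

theorem HasWalk.reflTransGen {u v : T.V} {k : ℕ} (h : T.HasWalk u v k) :
    Relation.ReflTransGen T.arc u v := by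
  induction k generalizing u with
  | zero => rw [hasWalk_zero.1 h]
  | succ k ih =>
    obtain ⟨w, huw, hw⟩ := hasWalk_succ.1 h
    exact (ih hw).head huw

theorem dist_le {u v : T.V} {k : ℕ} (h : T.HasWalk u v k) : T.dist u v ≤ k :=
  Nat.sInf_le h

theorem Strong.hasWalk_dist (hT : T.Strong) (u v : T.V) : T.HasWalk u v (T.dist u v) :=
  Nat.sInf_mem (hT.exists_hasWalk u v)

theorem dist_self (u : T.V) : T.dist u u = 0 :=
  Nat.le_zero.1 (dist_le (hasWalk_zero.2 rfl))

theorem arc_asymm {u v : T.V} (h : T.arc u v) : ¬ T.arc v u := by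
  refine (T.exactlyOne u v ?_).1 h
  rintro rfl
  exact T.irrefl u h

/-- Every node of a strong tournament with at least two nodes lies on a directed 3-cycle. -/
theorem Strong.hasWalk_self_three (hT : T.Strong) (hcard : 2 ≤ Fintype.card T.V) (x : T.V) :
    T.HasWalk x x 3 := by
  have : Nontrivial T.V := Fintype.one_lt_card_iff_nontrivial.1 hcard
  obtain ⟨z, hz⟩ := exists_ne x
  obtain h | ⟨y, hxy, -⟩ := Relation.ReflTransGen.cases_head (hT x z)
  · exact absurd h.symm hz
  by_contra hno
  have hout : ∀ v, Relation.ReflTransGen T.arc y v → T.arc x v := by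
    intro v hv
    induction hv with
    | refl => exact hxy
    | @tail b c _ hbc hxb =>
      have hxc : x ≠ c := by
        rintro rfl
        exact arc_asymm hxb hbc
      rw [T.exactlyOne x c hxc]
      intro hcx
      exact hno (hasWalk_succ.2 ⟨b, hxb, hasWalk_succ.2 ⟨c, hbc,
        hasWalk_succ.2 ⟨x, hcx, hasWalk_zero.2 rfl⟩⟩⟩)
  exact T.irrefl x (hout x (hT y x))

/-- The node of `T` underlying a node of `T.ILTT`. -/
def proj (T : Tournament) : T.ILTT.V → T.V := Sum.elim id id

theorem ILTT_arc_of_arc {u v : T.ILTT.V} (h : T.arc (T.proj u) (T.proj v)) :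
    T.ILTT.arc u v := by
  rcases u with x | x <;> rcases v with y | y
  exacts [h, h, Or.inl h, h]

theorem arc_or_eq_of_ILTT_arc {u v : T.ILTT.V} (h : T.ILTT.arc u v) :
    T.arc (T.proj u) (T.proj v) ∨ T.proj u = T.proj v := by
  rcases u with x | x <;> rcases v with y | y
  exacts [Or.inl h, Or.inl h, h, Or.inl h]

theorem hasWalk_ILTT {u v : T.ILTT.V} {k : ℕ}
    (h : T.HasWalk (T.proj u) (T.proj v) (k + 1)) : T.ILTT.HasWalk u v (k + 1) := by
  induction k generalizing u with
  | zero =>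
    obtain ⟨w, huw, hw⟩ := hasWalk_succ.1 h
    rw [hasWalk_zero.1 hw] at huw
    exact hasWalk_succ.2 ⟨v, ILTT_arc_of_arc huw, hasWalk_zero.2 rfl⟩
  | succ k ih =>
    obtain ⟨w, huw, hw⟩ := hasWalk_succ.1 h
    exact hasWalk_succ.2 ⟨Sum.inl w, ILTT_arc_of_arc huw, ih hw⟩

theorem HasWalk.proj {u v : T.ILTT.V} {k : ℕ} (h : T.ILTT.HasWalk u v k) :
    ∃ m ≤ k, T.HasWalk (T.proj u) (T.proj v) m := by
  induction k generalizing u with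
  | zero => exact ⟨0, le_rfl, hasWalk_zero.2 (congrArg _ (hasWalk_zero.1 h))⟩
  | succ k ih =>
    obtain ⟨w, huw, hw⟩ := hasWalk_succ.1 h
    obtain ⟨m, hm, hwalk⟩ := ih hw
    rcases arc_or_eq_of_ILTT_arc huw with harc | heq
    · exact ⟨m + 1, by omega, hasWalk_succ.2 ⟨_, harc, hwalk⟩⟩
    · exact ⟨m, by omega, heq ▸ hwalk⟩

theorem Strong.hasWalk_ILTT_dist (hT : T.Strong) {u v : T.ILTT.V} (h : T.proj u ≠ T.proj v) :
    T.ILTT.HasWalk u v (T.dist (T.proj u) (T.proj v)) := by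
  have hw := hT.hasWalk_dist (T.proj u) (T.proj v)
  generalize T.dist (T.proj u) (T.proj v) = k at hw
  cases k with
  | zero => exact absurd (hasWalk_zero.1 hw) h
  | succ k => exact hasWalk_ILTT hw

theorem Strong.ILTT (hT : T.Strong) (hcard : 2 ≤ Fintype.card T.V) : T.ILTT.Strong := by
  intro u v
  by_cases h : T.proj u = T.proj v
  · refine (hasWalk_ILTT (k := 2) ?_).reflTransGen
    rw [h]
    exact hT.hasWalk_self_three hcard _
  · exact (hT.hasWalk_ILTT_dist h).reflTransGen

theorem Strong.dist_ILTT_of_ne (hT : T.Strong) (hcard : 2 ≤ Fintype.card T.V) {u v : T.ILTT.V}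
    (h : T.proj u ≠ T.proj v) : T.ILTT.dist u v = T.dist (T.proj u) (T.proj v) := by
  refine le_antisymm (dist_le (hT.hasWalk_ILTT_dist h)) ?_
  obtain ⟨m, hm, hw⟩ := ((hT.ILTT hcard).hasWalk_dist u v).proj
  exact (dist_le hw).trans hm

theorem Strong.dist_inr_inl_self (hT : T.Strong) (hcard : 2 ≤ Fintype.card T.V) (x : T.V) :
    T.ILTT.dist (Sum.inr x) (Sum.inl x) = 1 := by
  have harc : T.ILTT.arc (Sum.inr x) (Sum.inl x) := Or.inr rfl
  refine le_antisymm (dist_le (hasWalk_succ.2 ⟨_, harc, hasWalk_zero.2 rfl⟩)) ?_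
  rw [Nat.one_le_iff_ne_zero]
  intro h0
  have hw := (hT.ILTT hcard).hasWalk_dist (Sum.inr x) (Sum.inl x)
  rw [h0] at hw
  cases hasWalk_zero.1 hw

theorem Strong.dist_inl_inr_self (hT : T.Strong) (hcard : 2 ≤ Fintype.card T.V) (x : T.V) :
    T.ILTT.dist (Sum.inl x) (Sum.inr x) = 3 := by
  have hle : T.ILTT.dist (Sum.inl x) (Sum.inr x) ≤ 3 :=
    dist_le (hasWalk_ILTT (k := 2) (hT.hasWalk_self_three hcard x))
  have hw := (hT.ILTT hcard).hasWalk_dist (Sum.inl x) (Sum.inr x)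
  generalize T.ILTT.dist (Sum.inl x) (Sum.inr x) = k at hw hle
  by_contra hne
  obtain rfl | rfl | rfl : k = 0 ∨ k = 1 ∨ k = 2 := by omega
  · cases hasWalk_zero.1 hw
  · obtain ⟨w, h₁, hw⟩ := hasWalk_succ.1 hw
    obtain rfl := hasWalk_zero.1 hw
    exact T.irrefl x h₁
  · obtain ⟨w, h₁, hw⟩ := hasWalk_succ.1 hw
    obtain ⟨w', h₂, hw⟩ := hasWalk_succ.1 hw
    obtain rfl := hasWalk_zero.1 hw
    rcases w with y | y <;> exact arc_asymm (T := T) (u := x) (v := y) h₁ h₂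

theorem wiener_eq_sum (T : Tournament) : T.wiener = ∑ u, ∑ v, T.dist u v := by
  rw [wiener, Finset.sum_filter_of_ne, Fintype.sum_prod_type]
  rintro ⟨u, v⟩ - h (heq : u = v)
  subst heq
  exact h (dist_self u)

theorem card_ILTT (T : Tournament) : Fintype.card T.ILTT.V = 2 * Fintype.card T.V := by
  rw [two_mul, ← Fintype.card_sum]
  exact Fintype.card_congr (Equiv.refl _)

theorem Strong.wiener_ILTT (hT : T.Strong) (hcard : 2 ≤ Fintype.card T.V) :
    T.ILTT.wiener = 4 * T.wiener + 4 * Fintype.card T.V := by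
  have hll (x y : T.V) : T.ILTT.dist (Sum.inl x) (Sum.inl y) = T.dist x y := by
    by_cases h : x = y
    · subst h
      exact (dist_self (T := T.ILTT) _).trans (dist_self x).symm
    · exact hT.dist_ILTT_of_ne hcard h
  have hrr (x y : T.V) : T.ILTT.dist (Sum.inr x) (Sum.inr y) = T.dist x y := by
    by_cases h : x = y
    · subst h
      exact (dist_self (T := T.ILTT) _).trans (dist_self x).symm
    · exact hT.dist_ILTT_of_ne hcard h
  have hlr (x y : T.V) :
      T.ILTT.dist (Sum.inl x) (Sum.inr y) = T.dist x y + if x = y then 3 else 0 := by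
    by_cases h : x = y
    · subst h
      rw [dist_self, if_pos rfl, hT.dist_inl_inr_self hcard]
    · rw [if_neg h]
      exact hT.dist_ILTT_of_ne hcard h
  have hrl (x y : T.V) :
      T.ILTT.dist (Sum.inr x) (Sum.inl y) = T.dist x y + if x = y then 1 else 0 := by
    by_cases h : x = y
    · subst h
      rw [dist_self, if_pos rfl, hT.dist_inr_inl_self hcard]
    · rw [if_neg h]
      exact hT.dist_ILTT_of_ne hcard h
  have hsplit (f : T.ILTT.V → ℕ) : ∑ u, f u = ∑ x : T.V, f (Sum.inl x) + ∑ x : T.V, f (Sum.inr x) :=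
    Fintype.sum_sum_type f
  simp only [wiener_eq_sum, hsplit, hll, hrr, hlr, hrl, Finset.sum_add_distrib,
    Finset.sum_ite_eq, Finset.mem_univ, if_true, Finset.sum_const, Finset.card_univ, smul_eq_mul]
  ring

theorem Strong.wiener_iterate_ILTT (hT : T.Strong) (hcard : 2 ≤ Fintype.card T.V) (t : ℕ) :
    (Tournament.ILTT^[t] T).Strong ∧
      Fintype.card (Tournament.ILTT^[t] T).V = 2 ^ t * Fintype.card T.V ∧
      (Tournament.ILTT^[t] T).wiener + 2 * (2 ^ t * Fintype.card T.V) =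
        4 ^ t * (T.wiener + 2 * Fintype.card T.V) := by
  induction t with
  | zero => exact ⟨hT, (one_mul _).symm, by simp only [Function.iterate_zero_apply]; ring⟩
  | succ t ih =>
    obtain ⟨hs, hc, hw⟩ := ih
    have hc2 : 2 ≤ Fintype.card (Tournament.ILTT^[t] T).V := by
      rw [hc]
      exact hcard.trans (Nat.le_mul_of_pos_left _ (by positivity))
    rw [Function.iterate_succ_apply', card_ILTT, hs.wiener_ILTT hc2, hc]
    refine ⟨hs.ILTT hc2, by ring, ?_⟩
    rw [pow_succ 4 t, mul_right_comm, ← hw]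
    ring

end Tournament

open Tournament

/-- For a strong tournament `G` of order `n ≥ 3`, the average
distances of `ILTT^t(G)` converge to `(2 + (n-1)·L(G))/n` as `t → ∞`. -/
theorem stmt8 (G : Tournament) (n : ℕ) (hn : Fintype.card G.V = n)
    (hcard : 3 ≤ n) (hG : G.Strong) :
    Filter.Tendsto (fun t : ℕ => (Tournament.ILTT^[t] G).avgDist) Filter.atTop
      (nhds ((2 + ((n : ℝ) - 1) * G.avgDist) / (n : ℝ))) := by
  have hn3 : (3 : ℝ) ≤ n := by exact_mod_cast hcard
  have hn0 : (n : ℝ) ≠ 0 := by linarith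
  have hn1 : (n : ℝ) - 1 ≠ 0 := by linarith
  have hformula (t : ℕ) : (Tournament.ILTT^[t] G).avgDist =
      ((G.wiener + 2 * n) - 2 * n * (1 / 2 : ℝ) ^ t) / (n * (n - (1 / 2 : ℝ) ^ t)) := by
    obtain ⟨-, hc, hw⟩ := hG.wiener_iterate_ILTT (by omega) t
    rw [hn] at hc hw
    have hw' : ((Tournament.ILTT^[t] G).wiener : ℝ) =
        (2 ^ t) ^ 2 * (G.wiener + 2 * n) - 2 * (2 ^ t * n) := by
      rw [eq_sub_iff_add_eq, ← pow_mul, mul_comm t, pow_mul]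
      norm_num
      exact_mod_cast hw
    have h2 : (1 : ℝ) ≤ 2 ^ t := one_le_pow₀ (by norm_num)
    have hden : (2 : ℝ) ^ t * n - 1 ≠ 0 := by nlinarith
    rw [avgDist, hw', hc, one_div, inv_pow]
    push_cast
    generalize (2 : ℝ) ^ t = s at h2 hden
    have hs : s ≠ 0 := by linarith
    have hden' : (n : ℝ) - s⁻¹ ≠ 0 := by
      intro h
      apply hden
      rw [sub_eq_zero.1 h, mul_inv_cancel₀ hs, sub_self]
    rw [div_eq_div_iff (by positivity) (by positivity)]
    field_simp
  have hlim : (2 + ((n : ℝ) - 1) * G.avgDist) / n =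
      ((G.wiener + 2 * n) - 2 * n * (0 : ℝ)) / (n * (n - 0)) := by
    rw [avgDist, hn]
    field_simp
    ring
  have hpow : Filter.Tendsto (fun t : ℕ => (1 / 2 : ℝ) ^ t) Filter.atTop (nhds 0) :=
    tendsto_pow_atTop_nhds_zero_of_lt_one (by norm_num) (by norm_num)
  simp only [hformula]
  rw [hlim]
  refine (tendsto_const_nhds.sub (hpow.const_mul _)).div
    ((tendsto_const_nhds.sub hpow).const_mul _) ?_
  simpa using hn0
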